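/- Let Ω be an open subset of ℝⁿ and let f, g, h be H-continuous pairs on Ω. Then (f ⊕ g) ⊕ h = f ⊕ (g ⊕ h), where each ⊕ denotes the unique H-continuous pair contained in the pointwise interval sum of its two arguments. -/

import Mathlib

open Set

/-- Points of `ℝⁿ`. -/
abbrev Pt (n : ℕ) := EuclideanSpace ℝ (Fin n)

/-- Lower Baire operator `I(D,Ω,f)(x) = sup_{δ>0} inf { f y : y ∈ B_δ(x) ∩ D }`,
where `B_δ(x) = { y ∈ Ω : ‖y - x‖ < δ }`. -/
noncomputable def Ilow {n : ℕ} (D Om : Set (Pt n)) (f : Pt n → ℝ) (x : Pt n) : ℝ :=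
  sSup {a : ℝ | ∃ δ : ℝ, 0 < δ ∧
    a = sInf (f '' {y | y ∈ Om ∧ ‖y - x‖ < δ ∧ y ∈ D})}

/-- Upper Baire operator `S(D,Ω,f)(x) = inf_{δ>0} sup { f y : y ∈ B_δ(x) ∩ D }`. -/
noncomputable def Shigh {n : ℕ} (D Om : Set (Pt n)) (f : Pt n → ℝ) (x : Pt n) : ℝ :=
  sInf {a : ℝ | ∃ δ : ℝ, 0 < δ ∧
    a = sSup (f '' {y | y ∈ Om ∧ ‖y - x‖ < δ ∧ y ∈ D})}

/-- `f`, defined on `D ⊆ Ω`, is locally bounded relative to `Ω`. -/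
def LocBddOn {n : ℕ} (Om D : Set (Pt n)) (f : Pt n → ℝ) : Prop :=
  ∀ x ∈ Om, ∃ δ : ℝ, 0 < δ ∧ ∃ M : ℝ,
    ∀ y, y ∈ Om → ‖y - x‖ < δ → y ∈ D → |f y| < M

/-- `(u, v)` encodes an interval-valued function `x ↦ [u x, v x]` on `Om`. -/
def IntervalPair {n : ℕ} (Om : Set (Pt n)) (u v : Pt n → ℝ) : Prop :=
  LocBddOn Om Om u ∧ LocBddOn Om Om v ∧ ∀ x ∈ Om, u x ≤ v x

/-- The pair `(u, v)` is S-continuous on `Om`: `I(u) = u` and `S(v) = v`. -/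
def SCont {n : ℕ} (Om : Set (Pt n)) (u v : Pt n → ℝ) : Prop :=
  ∀ x ∈ Om, Ilow Om Om u x = u x ∧ Shigh Om Om v x = v x

/-- The pair `(u, v)` is Hausdorff continuous on `Om`. -/
def HCont {n : ℕ} (Om : Set (Pt n)) (u v : Pt n → ℝ) : Prop :=
  ∀ p q : Pt n → ℝ, LocBddOn Om Om p → LocBddOn Om Om q →
    (∀ x ∈ Om, u x ≤ p x ∧ p x ≤ q x ∧ q x ≤ v x) →
    ∀ x ∈ Om, Ilow Om Om p x = u x ∧ Shigh Om Om q x = v x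

/-- `(u, v)` is an H-continuous interval pair on `Om`. -/
def HContPair {n : ℕ} (Om : Set (Pt n)) (u v : Pt n → ℝ) : Prop :=
  IntervalPair Om u v ∧ HCont Om u v

/-- Lower endpoint of the pointwise interval product. -/
noncomputable def imin {n : ℕ} (u₁ v₁ u₂ v₂ : Pt n → ℝ) (x : Pt n) : ℝ :=
  min (min (u₁ x * u₂ x) (u₁ x * v₂ x)) (min (v₁ x * u₂ x) (v₁ x * v₂ x))

/-- Upper endpoint of the pointwise interval product. -/
noncomputable def imax {n : ℕ} (u₁ v₁ u₂ v₂ : Pt n → ℝ) (x : Pt n) : ℝ :=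
  max (max (u₁ x * u₂ x) (u₁ x * v₂ x)) (max (v₁ x * u₂ x) (v₁ x * v₂ x))

/-- `(pl, pu)` is the H-continuous pair contained pointwise in the interval sum of
`(u₁, v₁)` and `(u₂, v₂)`, i.e. `(pl, pu) = (u₁,v₁) ⊕ (u₂,v₂)`. -/
def IsOplus {n : ℕ} (Om : Set (Pt n)) (u₁ v₁ u₂ v₂ pl pu : Pt n → ℝ) : Prop :=
  HContPair Om pl pu ∧
    ∀ x ∈ Om, u₁ x + u₂ x ≤ pl x ∧ pl x ≤ pu x ∧ pu x ≤ v₁ x + v₂ x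

/-- `(ql, qu)` is the H-continuous pair contained pointwise in the interval product of
`(u₁, v₁)` and `(u₂, v₂)`, i.e. `(ql, qu) = (u₁,v₁) ⊗ (u₂,v₂)`. -/
def IsOtimes {n : ℕ} (Om : Set (Pt n)) (u₁ v₁ u₂ v₂ ql qu : Pt n → ℝ) : Prop :=
  HContPair Om ql qu ∧
    ∀ x ∈ Om, imin u₁ v₁ u₂ v₂ x ≤ ql x ∧ ql x ≤ qu x ∧ qu x ≤ imax u₁ v₁ u₂ v₂ x

open Filter
open scoped Topology

/-!
If `w` is the width of an H-continuous pair, then `w < ε` on a relatively open dense subset of `Om`,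
for every `ε > 0`: near `x` the upper function stays below `v x + ε / 2`, while the lower function
exceeds `v x - ε / 2` at points arbitrarily close to `x`, hence also around those points. Finite
sums of widths inherit this property.

Let two H-continuous pairs `(al, au)` and `(bl, bu)` lie in an interval function whose width has
this property. Then `al` exceeds `bu` by at most `ε` on a dense set, so `al ≤ bu` everywhere by
semicontinuity of `al - bu`. The lower envelopes of `al` and `bu` are `al` and `bl`, and the upper
ones are `au` and `bu`, so `al ≤ bl` and `au ≤ bu`; by symmetry the two pairs agree. Both
`(f ⊕ g) ⊕ h` and `f ⊕ (g ⊕ h)` lie in `f + g + h`.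
-/

section DenselySmall

variable {X : Type*} [TopologicalSpace X] {s : Set X}

/-- `w` is densely small on `s` if for every `ε > 0` the relative interior of `{w < ε}` is dense
in `s`. This is the property of the widths of H-continuous pairs that is stable under addition. -/
def DenselySmallOn (w : X → ℝ) (s : Set X) : Prop :=
  ∀ ε > 0, ∀ x ∈ s, ∃ᶠ y in 𝓝[s] x, ∀ᶠ z in 𝓝[s] y, w z < ε

theorem frequently_frequently_nhdsWithin {x : X} {p : X → Prop} :
    (∃ᶠ y in 𝓝[s] x, ∃ᶠ z in 𝓝[s] y, p z) ↔ ∃ᶠ y in 𝓝[s] x, p y := by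
  rw [← not_iff_not]
  simp only [not_frequently, eventually_eventually_nhdsWithin]

theorem DenselySmallOn.add {w₁ w₂ : X → ℝ} (h₁ : DenselySmallOn w₁ s)
    (h₂ : DenselySmallOn w₂ s) : DenselySmallOn (w₁ + w₂) s := by
  intro ε hε x hx
  refine frequently_frequently_nhdsWithin.1
    (((h₁ (ε / 2) (half_pos hε) x hx).and_eventually eventually_mem_nhdsWithin).mono ?_)
  rintro y ⟨hw₁, hy⟩
  refine ((h₂ (ε / 2) (half_pos hε) y hy).and_eventually
    (eventually_eventually_nhdsWithin.2 hw₁)).mono fun z hz => ?_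
  filter_upwards [hz.1, hz.2] with t ht₂ ht₁
  simpa only [Pi.add_apply, add_halves] using add_lt_add ht₁ ht₂

theorem denselySmallOn_sub {u v : X → ℝ} (hu : LowerSemicontinuousOn u s)
    (hv : UpperSemicontinuousOn v s)
    (hfreq : ∀ x ∈ s, ∀ c < v x, ∃ᶠ y in 𝓝[s] x, c < u y) : DenselySmallOn (v - u) s := by
  intro ε hε x hx
  have hv_near : ∀ᶠ y in 𝓝[s] x, v y < v x + ε / 2 := hv x hx _ (by linarith)
  have hu_freq : ∃ᶠ y in 𝓝[s] x, v x - ε / 2 < u y := hfreq x hx _ (by linarith)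
  refine (hu_freq.and_eventually ((eventually_eventually_nhdsWithin.2 hv_near).and
    eventually_mem_nhdsWithin)).mono ?_
  rintro y ⟨huy, hvy, hy⟩
  filter_upwards [hvy, hu y hy _ huy] with z hvz huz
  rw [Pi.sub_apply]
  linarith

theorem le_of_le_add_denselySmallOn {a b w : X → ℝ} (ha : LowerSemicontinuousOn a s)
    (hb : UpperSemicontinuousOn b s) (hw : DenselySmallOn w s)
    (hle : ∀ x ∈ s, a x ≤ b x + w x) : ∀ x ∈ s, a x ≤ b x := by
  intro x hx
  by_contra! hlt
  obtain ⟨c, hbc, hca⟩ := exists_between hlt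
  obtain ⟨d, hcd, hda⟩ := exists_between hca
  have hgap : ∀ᶠ y in 𝓝[s] x, b y < c ∧ d < a y := (hb x hx c hbc).and (ha x hx d hda)
  obtain ⟨y, hwy, ⟨hby, hay⟩, hy⟩ :=
    ((hw (d - c) (sub_pos.2 hcd) x hx).and_eventually
      (hgap.and eventually_mem_nhdsWithin)).exists
  linarith [hwy.self_of_nhdsWithin hy, hle y hy]

end DenselySmall

section BaireOperators

variable {n : ℕ} {D Om : Set (Pt n)} {f : Pt n → ℝ} {x : Pt n} {c : ℝ}

/-- The set `B_δ(x) ∩ D` over which the Baire operators take extrema. -/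
def baireBall (D Om : Set (Pt n)) (x : Pt n) (δ : ℝ) : Set (Pt n) :=
  {y | y ∈ Om ∧ ‖y - x‖ < δ ∧ y ∈ D}

theorem mem_baireBall_self (hx : x ∈ Om ∩ D) {δ : ℝ} (hδ : 0 < δ) : x ∈ baireBall D Om x δ :=
  ⟨hx.1, by simpa using hδ, hx.2⟩

theorem nhdsWithin_hasBasis_baireBall (D Om : Set (Pt n)) (x : Pt n) :
    (𝓝[Om ∩ D] x).HasBasis (0 < ·) (baireBall D Om x) := by
  convert Metric.nhdsWithin_basis_ball (s := Om ∩ D) (x := x) using 1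
  ext δ y
  simp only [baireBall, mem_ofPred_eq, mem_inter_iff, mem_ball_iff_norm]
  tauto

-- An infimum over a ball on which `f` is unbounded below is `0` in `ℝ`, hence the `max`.
theorem bddAbove_sInf_image_baireBall (hx : x ∈ Om ∩ D) :
    BddAbove {a : ℝ | ∃ δ : ℝ, 0 < δ ∧ a = sInf (f '' baireBall D Om x δ)} := by
  refine ⟨max (f x) 0, ?_⟩
  rintro a ⟨δ, hδ, rfl⟩
  by_cases hb : BddBelow (f '' baireBall D Om x δ)
  · exact le_max_of_le_left (csInf_le hb (mem_image_of_mem f (mem_baireBall_self hx hδ)))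
  · exact (Real.sInf_of_not_bddBelow hb).trans_le (le_max_right _ _)

theorem sInf_image_baireBall_le_ilow (hx : x ∈ Om ∩ D) {δ : ℝ} (hδ : 0 < δ) :
    sInf (f '' baireBall D Om x δ) ≤ Ilow D Om f x :=
  le_csSup (bddAbove_sInf_image_baireBall hx) ⟨δ, hδ, rfl⟩

/- If `f` were unbounded below on a ball of radius `δ`, it would be so on the ball of radius `2δ`
about each point `z` of that ball; the infimum over the latter has the junk value `0`, and
`0 ≤ Ilow D Om f z ≤ f z` then bounds `f` below after all. -/
theorem bddBelow_image_baireBall (h : ∀ z ∈ Om ∩ D, Ilow D Om f z ≤ f z) (x : Pt n) (δ : ℝ) :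
    BddBelow (f '' baireBall D Om x δ) := by
  by_contra hunbdd
  refine hunbdd ⟨0, ?_⟩
  rintro _ ⟨z, ⟨hz, hzx, hzD⟩, rfl⟩
  have hδ : 0 < δ := (norm_nonneg _).trans_lt hzx
  have hsub : baireBall D Om x δ ⊆ baireBall D Om z (δ + δ) := by
    rintro y ⟨hy, hyx, hyD⟩
    refine ⟨hy, ?_, hyD⟩
    calc ‖y - z‖ ≤ ‖y - x‖ + ‖x - z‖ := norm_sub_le_norm_sub_add_norm_sub y x z
      _ < δ + δ := add_lt_add hyx (norm_sub_rev x z ▸ hzx)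
  have hunbdd_z : ¬BddBelow (f '' baireBall D Om z (δ + δ)) :=
    fun hb => hunbdd (hb.mono (image_mono hsub))
  calc (0 : ℝ) = sInf (f '' baireBall D Om z (δ + δ)) :=
        (Real.sInf_of_not_bddBelow hunbdd_z).symm
    _ ≤ Ilow D Om f z := sInf_image_baireBall_le_ilow ⟨hz, hzD⟩ (add_pos hδ hδ)
    _ ≤ f z := h z ⟨hz, hzD⟩

theorem eventually_lt_of_lt_ilow (hb : ∀ δ, BddBelow (f '' baireBall D Om x δ))
    (hc : c < Ilow D Om f x) : ∀ᶠ y in 𝓝[Om ∩ D] x, c < f y := by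
  obtain ⟨_, ⟨δ, hδ, rfl⟩, hcδ⟩ := exists_lt_of_lt_csSup (by exact ⟨_, 1, one_pos, rfl⟩) hc
  exact (nhdsWithin_hasBasis_baireBall D Om x).eventually_iff.2
    ⟨δ, hδ, fun y hy => hcδ.trans_le (csInf_le (hb δ) (mem_image_of_mem f hy))⟩

theorem frequently_lt_of_ilow_lt (hx : x ∈ Om ∩ D) (hc : Ilow D Om f x < c) :
    ∃ᶠ y in 𝓝[Om ∩ D] x, f y < c := by
  refine (nhdsWithin_hasBasis_baireBall D Om x).frequently_iff.2 fun {δ} hδ => ?_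
  obtain ⟨_, ⟨y, hy, rfl⟩, hyc⟩ := exists_lt_of_csInf_lt
    ((nonempty_of_mem (mem_baireBall_self hx hδ)).image f)
    ((sInf_image_baireBall_le_ilow hx hδ).trans_lt hc)
  exact ⟨y, hy, hyc⟩

theorem lowerSemicontinuousOn_of_ilow_eq (h : ∀ x ∈ Om, Ilow Om Om f x = f x) :
    LowerSemicontinuousOn f Om := by
  intro x hx c hc
  simpa only [inter_self] using eventually_lt_of_lt_ilow
    (bddBelow_image_baireBall (fun z hz => (h z hz.1).le) x) ((h x hx).symm ▸ hc)

theorem shigh_neg (D Om : Set (Pt n)) (f : Pt n → ℝ) (x : Pt n) :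
    Shigh D Om (-f) x = -Ilow D Om f x := by
  have himage (B : Set (Pt n)) : sSup ((-f) '' B) = -sInf (f '' B) := by
    rw [← Real.sSup_neg, ← image_neg_eq_neg, image_image]
    rfl
  rw [Shigh, Ilow, ← Real.sInf_neg]
  congr 1
  ext a
  simp only [Set.mem_neg, mem_ofPred_eq, himage, neg_eq_iff_eq_neg]

theorem ilow_neg (D Om : Set (Pt n)) (f : Pt n → ℝ) (x : Pt n) :
    Ilow D Om (-f) x = -Shigh D Om f x := by
  rw [← neg_neg f, shigh_neg, neg_neg, neg_neg]

theorem LocBddOn.neg (h : LocBddOn Om D f) : LocBddOn Om D (-f) := by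
  simpa only [LocBddOn, Pi.neg_apply, abs_neg] using h

end BaireOperators

namespace HContPair

variable {n : ℕ} {Om : Set (Pt n)} {u v al au bl bu w : Pt n → ℝ}

theorem neg (h : HContPair Om u v) : HContPair Om (-v) (-u) := by
  obtain ⟨⟨hu, hv, huv⟩, hH⟩ := h
  refine ⟨⟨hv.neg, hu.neg, fun x hx => neg_le_neg (huv x hx)⟩, fun p q hp hq hpq x hx => ?_⟩
  obtain ⟨hlower, hupper⟩ := hH (-q) (-p) hq.neg hp.neg
    (fun y hy => ⟨le_neg_of_le_neg (hpq y hy).2.2, neg_le_neg (hpq y hy).2.1,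
      neg_le_of_neg_le (hpq y hy).1⟩) x hx
  rw [ilow_neg] at hlower
  rw [shigh_neg] at hupper
  exact ⟨neg_eq_iff_eq_neg.1 hupper, neg_eq_iff_eq_neg.1 hlower⟩

theorem lowerSemicontinuousOn (h : HContPair Om u v) : LowerSemicontinuousOn u Om :=
  lowerSemicontinuousOn_of_ilow_eq fun x hx =>
    (h.2 u v h.1.1 h.1.2.1 (fun y hy => ⟨le_rfl, h.1.2.2 y hy, le_rfl⟩) x hx).1

theorem upperSemicontinuousOn (h : HContPair Om u v) : UpperSemicontinuousOn v Om :=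
  fun x hx c hc => (h.neg.lowerSemicontinuousOn x hx (-c) (neg_lt_neg hc)).mono
    fun _ => neg_lt_neg_iff.1

theorem frequently_upper_lt (h : HContPair Om u v) {x : Pt n} (hx : x ∈ Om) {c : ℝ}
    (hc : u x < c) : ∃ᶠ y in 𝓝[Om] x, v y < c := by
  have hlower : Ilow Om Om v x = u x :=
    (h.2 v v h.1.2.1 h.1.2.1 (fun y hy => ⟨h.1.2.2 y hy, le_rfl, le_rfl⟩) x hx).1
  simpa only [inter_self] using frequently_lt_of_ilow_lt ⟨hx, hx⟩ (hlower.trans_lt hc)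

theorem frequently_lt_lower (h : HContPair Om u v) {x : Pt n} (hx : x ∈ Om) {c : ℝ}
    (hc : c < v x) : ∃ᶠ y in 𝓝[Om] x, c < u y :=
  (h.neg.frequently_upper_lt hx (neg_lt_neg hc)).mono fun _ => neg_lt_neg_iff.1

theorem denselySmallOn_width (h : HContPair Om u v) : DenselySmallOn (v - u) Om :=
  denselySmallOn_sub h.lowerSemicontinuousOn h.upperSemicontinuousOn
    fun _ hx _ hc => h.frequently_lt_lower hx hc

theorem lower_le_lower_of_lower_le_upper (ha : HContPair Om al au) (hb : HContPair Om bl bu)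
    (hab : ∀ x ∈ Om, al x ≤ bu x) : ∀ x ∈ Om, al x ≤ bl x := by
  intro x hx
  by_contra! hlt
  obtain ⟨c, hbc, hca⟩ := exists_between hlt
  obtain ⟨y, hby, hay, hy⟩ := ((hb.frequently_upper_lt hx hbc).and_eventually
    ((ha.lowerSemicontinuousOn x hx c hca).and eventually_mem_nhdsWithin)).exists
  exact (hby.trans hay).not_ge (hab y hy)

theorem upper_le_upper_of_lower_le_upper (ha : HContPair Om al au) (hb : HContPair Om bl bu)
    (hab : ∀ x ∈ Om, al x ≤ bu x) : ∀ x ∈ Om, au x ≤ bu x :=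
  fun x hx => neg_le_neg_iff.1 <| hb.neg.lower_le_lower_of_lower_le_upper ha.neg
    (fun y hy => neg_le_neg (hab y hy)) x hx

theorem le_of_lower_le_upper_add (ha : HContPair Om al au) (hb : HContPair Om bl bu)
    (hw : DenselySmallOn w Om) (hle : ∀ x ∈ Om, al x ≤ bu x + w x) :
    ∀ x ∈ Om, al x ≤ bl x ∧ au x ≤ bu x := by
  have hab : ∀ x ∈ Om, al x ≤ bu x :=
    le_of_le_add_denselySmallOn ha.lowerSemicontinuousOn hb.upperSemicontinuousOn hw hle
  exact fun x hx => ⟨ha.lower_le_lower_of_lower_le_upper hb hab x hx,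
    ha.upper_le_upper_of_lower_le_upper hb hab x hx⟩

theorem eq_of_lower_le_upper_add (ha : HContPair Om al au) (hb : HContPair Om bl bu)
    (hw : DenselySmallOn w Om) (hab : ∀ x ∈ Om, al x ≤ bu x + w x)
    (hba : ∀ x ∈ Om, bl x ≤ au x + w x) : ∀ x ∈ Om, al x = bl x ∧ au x = bu x := by
  intro x hx
  obtain ⟨hl, hu⟩ := ha.le_of_lower_le_upper_add hb hw hab x hx
  obtain ⟨hl', hu'⟩ := hb.le_of_lower_le_upper_add ha hw hba x hx
  exact ⟨hl.antisymm hl', hu.antisymm hu'⟩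

end HContPair

theorem stmt12_general {n : ℕ} {Om : Set (Pt n)}
    {u₁ v₁ u₂ v₂ u₃ v₃ : Pt n → ℝ}
    (h₁ : HContPair Om u₁ v₁) (h₂ : HContPair Om u₂ v₂) (h₃ : HContPair Om u₃ v₃)
    {pl pu ql qu al au bl bu : Pt n → ℝ}
    (hfg : IsOplus Om u₁ v₁ u₂ v₂ pl pu)
    (hfg_h : IsOplus Om pl pu u₃ v₃ al au)
    (hgh : IsOplus Om u₂ v₂ u₃ v₃ ql qu)
    (hf_gh : IsOplus Om u₁ v₁ ql qu bl bu) :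
    ∀ x ∈ Om, al x = bl x ∧ au x = bu x := by
  have hw : DenselySmallOn (v₁ - u₁ + (v₂ - u₂) + (v₃ - u₃)) Om :=
    (h₁.denselySmallOn_width.add h₂.denselySmallOn_width).add h₃.denselySmallOn_width
  refine hfg_h.1.eq_of_lower_le_upper_add hf_gh.1 hw (fun x hx => ?_) fun x hx => ?_ <;>
  · obtain ⟨hpl, -, hpu⟩ := hfg.2 x hx
    obtain ⟨hal, hau, hau'⟩ := hfg_h.2 x hx
    obtain ⟨hql, -, hqu⟩ := hgh.2 x hx
    obtain ⟨hbl, hbu, hbu'⟩ := hf_gh.2 x hx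
    simp only [Pi.add_apply, Pi.sub_apply]
    linarith

theorem stmt12 {n : ℕ} (Om : Set (Pt n)) (hOm : IsOpen Om)
    (u₁ v₁ u₂ v₂ u₃ v₃ : Pt n → ℝ)
    (h₁ : HContPair Om u₁ v₁) (h₂ : HContPair Om u₂ v₂) (h₃ : HContPair Om u₃ v₃)
    (pl pu ql qu al au bl bu : Pt n → ℝ)
    (hfg : IsOplus Om u₁ v₁ u₂ v₂ pl pu)
    (hfg_h : IsOplus Om pl pu u₃ v₃ al au)
    (hgh : IsOplus Om u₂ v₂ u₃ v₃ ql qu)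
    (hf_gh : IsOplus Om u₁ v₁ ql qu bl bu) :
    ∀ x ∈ Om, al x = bl x ∧ au x = bu x :=
  stmt12_general h₁ h₂ h₃ hfg hfg_h hgh hf_gh
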